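/- For every real n > 0: (i) lim_{s→+∞} s · f_n(s) = 1, and (ii) lim_{s→−∞} f_n(s) / |s| = 1/n. -/

import Mathlib

open MeasureTheory

/-- `I k s = ∫₀^∞ x^k e^{-x⁴/4 - s x²/2} dx`. -/
noncomputable def I (k s : ℝ) : ℝ :=
  ∫ x in Set.Ioi (0 : ℝ), x ^ k * Real.exp (-x ^ 4 / 4 - s * x ^ 2 / 2)

/-- The universal profile `f n s = I (n+1) s / (n · I (n-1) s)`. -/
noncomputable def f (n s : ℝ) : ℝ := I (n + 1) s / (n * I (n - 1) s)

/-!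
In the variable `y = x²` the weight is, up to a factor depending only on `s`, the Gaussian
`e^{-(y+s)²/4}`. Integration by parts gives a recurrence for the moments of `y + s`, which expresses
all of them through `a = I (n-1) s` and `b = I (n+1) s`. For `s > 0` the nonnegativity of
`I (n+3) s = n a - s b` and the recurrence one step further enclose `s b / (n a)`. For `s < 0` the
profile is enclosed by the nonnegativity of two even moments: that of `(y+s)²` against `x^(n-1)`
bounds `b` above, and that of `(y+s)⁴` against `x^(n+1)` bounds it below. In both cases the error
is `O(s⁻²)`.
-/

open Filter Set Topology

section Weight

variable {k : ℝ}

/-- The weight `e^{-x⁴/4 - s x²/2}` of which the integrals `I k s` are the moments on `(0, ∞)`. -/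
noncomputable def quarticWeight (s x : ℝ) : ℝ :=
  Real.exp (-x ^ 4 / 4 - s * x ^ 2 / 2)

theorem quarticWeight_pos (s x : ℝ) : 0 < quarticWeight s x :=
  Real.exp_pos _

theorem quarticWeight_le (s x : ℝ) :
    quarticWeight s x ≤ Real.exp ((s - 1) ^ 2 / 4) * Real.exp (-(1 / 2) * x ^ 2) := by
  rw [quarticWeight, ← Real.exp_add, Real.exp_le_exp]
  linarith [sq_nonneg (x ^ 2 / 2 + (s - 1) / 2)]

theorem hasDerivAt_quarticWeight (s x : ℝ) :
    HasDerivAt (quarticWeight s) (quarticWeight s x * -(x * (x ^ 2 + s))) x := by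
  have hexponent :
      HasDerivAt (fun x : ℝ ↦ -x ^ 4 / 4 - s * x ^ 2 / 2) (-(x * (x ^ 2 + s))) x := by
    refine (((hasDerivAt_pow 4 x).neg.div_const 4).sub
      (((hasDerivAt_pow 2 x).const_mul s).div_const 2)).congr_deriv ?_
    push_cast
    ring
  exact hexponent.exp

@[fun_prop]
theorem continuous_quarticWeight (s : ℝ) : Continuous (quarticWeight s) :=
  continuous_iff_continuousAt.mpr fun x ↦ (hasDerivAt_quarticWeight s x).continuousAt

theorem integrableOn_rpow_mul_quarticWeight (hk : -1 < k) (s : ℝ) :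
    IntegrableOn (fun x : ℝ ↦ x ^ k * quarticWeight s x) (Ioi 0) := by
  refine ((integrableOn_rpow_mul_exp_neg_mul_sq (b := 1 / 2) (by norm_num) hk).const_mul
    (Real.exp ((s - 1) ^ 2 / 4))).mono' (by fun_prop) ?_
  filter_upwards [ae_restrict_mem measurableSet_Ioi] with x hx
  have hxk : 0 ≤ x ^ k := Real.rpow_nonneg (le_of_lt hx) k
  rw [Real.norm_of_nonneg (mul_nonneg hxk (quarticWeight_pos s x).le), mul_left_comm]
  exact mul_le_mul_of_nonneg_left (quarticWeight_le s x) hxk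

end Weight

section CentredMoments

variable {k : ℝ}

/-- The `m`-th moment of `x² + s` against `x^k * quarticWeight s x` on `(0, ∞)`; it is
centred because the weight is largest at `x² = -s` when `s < 0`. -/
noncomputable def centredMoment (k : ℝ) (m : ℕ) (s : ℝ) : ℝ :=
  ∫ x in Ioi (0 : ℝ), x ^ k * (x ^ 2 + s) ^ m * quarticWeight s x

theorem centredMoment_zero (k s : ℝ) : centredMoment k 0 s = I k s := by
  simp only [centredMoment, I, quarticWeight, pow_zero, mul_one]

theorem rpow_mul_sq_add_pow_succ {x : ℝ} (hx : 0 < x) (k s c : ℝ) (m : ℕ) :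
    x ^ k * (x ^ 2 + s) ^ (m + 1) * c =
      x ^ (k + 2) * (x ^ 2 + s) ^ m * c + s * (x ^ k * (x ^ 2 + s) ^ m * c) := by
  rw [Real.rpow_add hx, Real.rpow_two]
  ring

theorem integrableOn_centredMoment (hk : -1 < k) (m : ℕ) (s : ℝ) :
    IntegrableOn (fun x : ℝ ↦ x ^ k * (x ^ 2 + s) ^ m * quarticWeight s x) (Ioi 0) := by
  induction m generalizing k with
  | zero => simpa only [pow_zero, mul_one] using integrableOn_rpow_mul_quarticWeight hk s
  | succ m ih =>
    exact ((ih (by linarith)).add ((ih hk).const_mul s)).congr_fun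
      (fun x hx ↦ (rpow_mul_sq_add_pow_succ hx k s _ m).symm) measurableSet_Ioi

theorem centredMoment_succ (hk : -1 < k) (m : ℕ) (s : ℝ) :
    centredMoment k (m + 1) s = centredMoment (k + 2) m s + s * centredMoment k m s := by
  unfold centredMoment
  rw [← integral_const_mul, ← integral_add (integrableOn_centredMoment (by linarith) m s)
    ((integrableOn_centredMoment hk m s).const_mul s)]
  exact setIntegral_congr_fun measurableSet_Ioi fun x hx ↦ rpow_mul_sq_add_pow_succ hx k s _ m

theorem centredMoment_nonneg {m : ℕ} (hm : Even m) (k s : ℝ) : 0 ≤ centredMoment k m s := by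
  refine setIntegral_nonneg measurableSet_Ioi fun x hx ↦ ?_
  have hxk : 0 ≤ x ^ k := Real.rpow_nonneg (le_of_lt hx) k
  exact mul_nonneg (mul_nonneg hxk (hm.pow_nonneg _)) (quarticWeight_pos s x).le

theorem hasDerivAt_rpow_mul_sq_add_pow_mul_quarticWeight {x : ℝ} (hx : 0 < x) (k s : ℝ) (m : ℕ) :
    HasDerivAt (fun x : ℝ ↦ x ^ k * (x ^ 2 + s) ^ m * quarticWeight s x)
      (k * (x ^ (k - 1) * (x ^ 2 + s) ^ m * quarticWeight s x) +
        2 * m * (x ^ (k + 1) * (x ^ 2 + s) ^ (m - 1) * quarticWeight s x) -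
        x ^ (k + 1) * (x ^ 2 + s) ^ (m + 1) * quarticWeight s x) x := by
  have hrpow : HasDerivAt (fun x : ℝ ↦ x ^ k) (k * x ^ (k - 1)) x :=
    Real.hasDerivAt_rpow_const (Or.inl hx.ne')
  have hpow : HasDerivAt (fun x : ℝ ↦ (x ^ 2 + s) ^ m) (m * (x ^ 2 + s) ^ (m - 1) * (2 * x)) x := by
    simpa using ((hasDerivAt_pow 2 x).add_const s).fun_pow m
  refine ((hrpow.mul hpow).mul (hasDerivAt_quarticWeight s x)).congr_deriv ?_
  simp only [Pi.mul_apply]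
  rw [Real.rpow_add hx, Real.rpow_one]
  ring

/- For `m = 0` the truncated subtraction `m - 1` is harmless, as its term has coefficient `0`. -/
theorem centredMoment_add_one_succ (hk : 0 < k) (m : ℕ) (s : ℝ) :
    centredMoment (k + 1) (m + 1) s =
      k * centredMoment (k - 1) m s + 2 * m * centredMoment (k + 1) (m - 1) s := by
  have hlower := (integrableOn_centredMoment (k := k - 1) (by linarith) m s).const_mul k
  have hpow := (integrableOn_centredMoment (k := k + 1) (by linarith) (m - 1) s).const_mul (2 * m)
  have hweight := integrableOn_centredMoment (k := k + 1) (by linarith) (m + 1) s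
  have hderiv (x : ℝ) (hx : x ∈ Ioi 0) := hasDerivAt_rpow_mul_sq_add_pow_mul_quarticWeight hx k s m
  have hcont : Continuous fun x : ℝ ↦ x ^ k * (x ^ 2 + s) ^ m * quarticWeight s x := by
    have := Real.continuous_rpow_const hk.le
    fun_prop
  have hlim := tendsto_zero_of_hasDerivAt_of_integrableOn_Ioi hderiv ((hlower.add hpow).sub hweight)
    (integrableOn_centredMoment (by linarith) m s)
  have hparts := integral_Ioi_of_hasDerivAt_of_tendsto hcont.continuousWithinAt hderiv
    ((hlower.add hpow).sub hweight) hlim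
  rw [integral_sub (hlower.fun_add hpow) hweight, integral_add hlower hpow, integral_const_mul,
    integral_const_mul, Real.zero_rpow hk.ne'] at hparts
  simp only [centredMoment]
  linarith

end CentredMoments

section Moments

variable {k n s : ℝ}

theorem I_pos (hk : -1 < k) (s : ℝ) : 0 < I k s := by
  change 0 < ∫ x in Ioi 0, x ^ k * quarticWeight s x
  have hpos (x : ℝ) (hx : x ∈ Ioi 0) : 0 < x ^ k * quarticWeight s x :=
    mul_pos (Real.rpow_pos_of_pos hx k) (quarticWeight_pos s x)
  rw [setIntegral_pos_iff_support_of_nonneg_ae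
    ((ae_restrict_mem measurableSet_Ioi).mono fun x hx ↦ (hpos x hx).le)
    (integrableOn_rpow_mul_quarticWeight hk s),
    inter_eq_right.mpr fun x hx ↦ Function.mem_support.mpr (hpos x hx).ne']
  simp only [Real.volume_Ioi, ENNReal.zero_lt_top]

theorem I_add_three (hk : 0 < k) (s : ℝ) : I (k + 3) s = k * I (k - 1) s - s * I (k + 1) s := by
  have hparts := centredMoment_add_one_succ hk 0 s
  have hshift := centredMoment_succ (k := k + 1) (by linarith) 0 s
  simp only [centredMoment_zero, Nat.cast_zero, mul_zero, zero_mul, add_zero] at hparts hshift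
  rw [show k + 1 + 2 = k + 3 by ring] at hshift
  linarith

theorem mul_I_add_one_le (hk : 0 < k) (s : ℝ) : s * I (k + 1) s ≤ k * I (k - 1) s := by
  linarith [I_add_three hk s, I_pos (k := k + 3) (by linarith) s]

theorem sq_mul_I_add_three_le (hn : 0 < n) (hs : 0 ≤ s) :
    s ^ 2 * I (n + 3) s ≤ (n + 2) * (n * I (n - 1) s) := by
  have hstep := mul_I_add_one_le (k := n + 2) (by linarith) s
  rw [show n + 2 + 1 = n + 3 by ring, show n + 2 - 1 = n + 1 by ring] at hstep
  calc s ^ 2 * I (n + 3) s = s * (s * I (n + 3) s) := by ring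
    _ ≤ s * ((n + 2) * I (n + 1) s) := by gcongr
    _ = (n + 2) * (s * I (n + 1) s) := by ring
    _ ≤ (n + 2) * (n * I (n - 1) s) :=
      mul_le_mul_of_nonneg_left (mul_I_add_one_le hn s) (by linarith)

theorem centredMoment_sub_one_two (hn : 0 < n) (s : ℝ) :
    centredMoment (n - 1) 2 s = (n + s ^ 2) * I (n - 1) s + s * I (n + 1) s := by
  have hfirst := centredMoment_succ (k := n - 1) (by linarith) 0 s
  have hsecond := centredMoment_succ (k := n - 1) (by linarith) 1 s
  have hparts := centredMoment_add_one_succ hn 0 s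
  rw [show n - 1 + 2 = n + 1 by ring] at hfirst hsecond
  simp only [centredMoment_zero, Nat.reduceAdd, Nat.cast_zero, mul_zero, zero_mul, add_zero,
    zero_add] at hfirst hsecond hparts
  rw [hsecond, hparts, hfirst]
  ring

theorem centredMoment_add_one_four (hn : 0 < n) (s : ℝ) :
    centredMoment (n + 1) 4 s =
      (n * s ^ 2 + (n + 2) * (n + 6)) * I (n + 1) s +
        n * s * (s ^ 2 + 2 * n + 6) * I (n - 1) s := by
  have hfirst := centredMoment_succ (k := n - 1) (by linarith) 0 s
  have hthird := centredMoment_succ (k := n - 1) (by linarith) 2 s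
  have hparts₂ := centredMoment_add_one_succ hn 1 s
  have hparts₄ := centredMoment_add_one_succ hn 3 s
  rw [show n - 1 + 2 = n + 1 by ring] at hfirst hthird
  simp only [centredMoment_zero, Nat.reduceAdd, Nat.reduceSub, Nat.cast_one, Nat.cast_ofNat,
    zero_add, tsub_self] at hfirst hthird hparts₂ hparts₄
  rw [hparts₄, hthird, hparts₂, hfirst, centredMoment_sub_one_two hn]
  ring

end Moments

section ProfileBounds

variable {n s : ℝ}

theorem abs_mul_f_sub_one_le (hn : 0 < n) (hs : 0 < s) : |s * f n s - 1| ≤ (n + 2) / s ^ 2 := by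
  have ha : 0 < I (n - 1) s := I_pos (by linarith) s
  have hc : 0 < I (n + 3) s := I_pos (by linarith) s
  have herror : s * f n s - 1 = -(I (n + 3) s / (n * I (n - 1) s)) := by
    rw [f, I_add_three hn]
    field_simp
    ring
  rw [herror, abs_neg, abs_of_pos (by positivity), div_le_div_iff₀ (by positivity) (by positivity),
    mul_comm]
  exact sq_mul_I_add_three_le hn hs.le

theorem f_div_abs_le (hn : 0 < n) (hs : s < 0) : f n s / |s| ≤ 1 / n + 1 / s ^ 2 := by
  have ha : 0 < I (n - 1) s := I_pos (by linarith) s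
  have hsq := centredMoment_nonneg even_two (n - 1) s
  rw [centredMoment_sub_one_two hn] at hsq
  have ht : 0 < -s := neg_pos.mpr hs
  have hbound : 1 / n + 1 / s ^ 2 =
      (n + s ^ 2) * I (n - 1) s / (-s) / (n * I (n - 1) s) / (-s) := by
    field_simp [hs.ne]
    ring
  rw [hbound, f, abs_of_neg hs]
  gcongr
  rw [le_div_iff₀ ht]
  linarith

theorem le_f_div_abs (hn : 0 < n) (hs : s < 0) :
    s ^ 2 / (n * s ^ 2 + (n + 2) * (n + 6)) ≤ f n s / |s| := by
  have ha : 0 < I (n - 1) s := I_pos (by linarith) s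
  have hfour := centredMoment_nonneg (m := 4) (by decide) (n + 1) s
  rw [centredMoment_add_one_four hn] at hfour
  have ht : 0 < -s := neg_pos.mpr hs
  have hcorrection : 0 ≤ -s * (n * (2 * n + 6) * I (n - 1) s) := by positivity
  rw [f, abs_of_neg hs, div_div, div_le_div_iff₀ (by positivity) (by positivity)]
  linarith

theorem abs_f_div_abs_sub_le (hn : 0 < n) (hs : s < 0) :
    |f n s / |s| - 1 / n| ≤ (n + 2) * (n + 6) / n ^ 2 / s ^ 2 := by
  have hs2 : 0 < s ^ 2 := sq_pos_of_neg hs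
  have hupper : 1 / s ^ 2 ≤ (n + 2) * (n + 6) / n ^ 2 / s ^ 2 := by
    gcongr
    rw [one_le_div (by positivity)]
    nlinarith
  have hlower : 1 / n - s ^ 2 / (n * s ^ 2 + (n + 2) * (n + 6)) ≤
      (n + 2) * (n + 6) / n ^ 2 / s ^ 2 :=
    calc 1 / n - s ^ 2 / (n * s ^ 2 + (n + 2) * (n + 6))
        = (n + 2) * (n + 6) / (n * (n * s ^ 2 + (n + 2) * (n + 6))) := by field_simp; ring
      _ ≤ (n + 2) * (n + 6) / (n * (n * s ^ 2)) := by
          gcongr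
          exact le_add_of_nonneg_right (by positivity)
      _ = (n + 2) * (n + 6) / n ^ 2 / s ^ 2 := by rw [div_div]; ring
  rw [abs_le]
  constructor <;> linarith [f_div_abs_le hn hs, le_f_div_abs hn hs]

end ProfileBounds

theorem tendsto_of_abs_sub_le_const_div {α : Type*} {l : Filter α} {g u : α → ℝ} {L C : ℝ}
    (hu : Tendsto u l atTop) (h : ∀ᶠ x in l, |g x - L| ≤ C / u x) : Tendsto g l (𝓝 L) :=
  tendsto_iff_norm_sub_tendsto_zero.mpr <|
    squeeze_zero' (Eventually.of_forall fun _ ↦ norm_nonneg _) h (hu.const_div_atTop C)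

/-- Tail asymptotics of the universal profile: `s f_n(s) → 1` as `s → +∞` and
`f_n(s)/|s| → 1/n` as `s → -∞`. -/
theorem universal_profile_tail_asymptotics (n : ℝ) (hn : 0 < n) :
    Filter.Tendsto (fun s : ℝ => s * f n s) Filter.atTop (nhds 1) ∧
    Filter.Tendsto (fun s : ℝ => f n s / |s|) Filter.atBot (nhds (1 / n)) := by
  constructor
  · refine tendsto_of_abs_sub_le_const_div (C := n + 2) (tendsto_pow_atTop two_ne_zero) ?_
    filter_upwards [eventually_gt_atTop 0] with s hs using abs_mul_f_sub_one_le hn hs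
  · have hsq : Tendsto (fun s : ℝ ↦ s ^ 2) atBot atTop := by
      simpa [Function.comp_def] using
        (tendsto_pow_atTop (α := ℝ) two_ne_zero).comp tendsto_abs_atBot_atTop
    refine tendsto_of_abs_sub_le_const_div (C := (n + 2) * (n + 6) / n ^ 2) hsq ?_
    filter_upwards [eventually_lt_atBot 0] with s hs using abs_f_div_abs_sub_le hn hs
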